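/- arXiv:2106.15741 — 6 statements merged into one kernel-verified Lean document; each statement's English description precedes it below -/
import Mathlib

section
/- For every ε > 0 there exists δ > 0 with the following property: for every unital C*-algebra B and all projections p, q ∈ B with ‖q − q·p‖ < δ, there is a partial isometry w ∈ B such that w·w* = q, w*·w ≤ p, and ‖w − q‖ < ε. -/
lemma stmt9_aux_real (x t : ℝ) (ht : t ≤ 1/2) (hx : |x| ≤ t) :
    |(√(1 - x))⁻¹ - 1| ≤ 2 * t := by
  obtain ⟨h1, h2⟩ := abs_le.mp hx
  have hs : 1/2 ≤ √(1 - x) := Real.le_sqrt_of_sq_le (by nlinarith)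
  have hq : √(1 - x) * √(1 - x) = 1 - x := Real.mul_self_sqrt (by linarith)
  have hpos : 0 < √(1 - x) := by linarith
  have e : (√(1 - x))⁻¹ - 1 = (1 - √(1 - x)) / √(1 - x) := by field_simp
  rw [e, abs_div, abs_of_pos hpos, div_le_iff₀ hpos, abs_le]
  have ht0 : 0 ≤ t := (abs_nonneg x).trans hx
  constructor <;> nlinarith [mul_nonneg ht0 (sub_nonneg.mpr hs)]

lemma stmt9_aux_root {B : Type*} [CStarAlgebra B] (h q : B) (hh : IsSelfAdjoint h) (t : ℝ)
    (ht : t ≤ 1/2) (hn : ‖h‖ ≤ t) (hq : Commute h q) :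
    ∃ r : B, IsSelfAdjoint r ∧ Commute r q ∧ Commute r h ∧ r * (r * (1 - h)) = 1 ∧ ‖r - 1‖ ≤ 2 * t := by
  have ht0 : 0 ≤ t := (norm_nonneg h).trans hn
  rcases subsingleton_or_nontrivial B with hB | hB
  · refine ⟨1, .one _, Commute.one_left _, Commute.one_left _, Subsingleton.elim _ _, ?_⟩
    simp [ht0]
  have hsp : ∀ x ∈ spectrum ℝ h, |x| ≤ t := fun x hx =>
    (spectrum.norm_le_norm_of_mem hx).trans hn
  have hpos : ∀ x ∈ spectrum ℝ h, 0 < 1 - x := fun x hx => by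
    have := (abs_le.mp (hsp x hx)).2
    linarith
  have hc : ContinuousOn (fun x : ℝ => (√(1 - x))⁻¹) (spectrum ℝ h) :=
    ContinuousOn.inv₀ (by fun_prop) fun x hx => (Real.sqrt_pos.mpr (hpos x hx)).ne'
  refine ⟨cfc (fun x : ℝ => (√(1 - x))⁻¹) h, cfc_predicate _ h, ?_, ?_, ?_, ?_⟩
  · exact hh.commute_cfc hq _
  · exact hh.commute_cfc (Commute.refl h) _
  · have e : 1 - h = cfc (fun x : ℝ => 1 - x) h := by
      rw [cfc_sub (fun _ : ℝ => (1:ℝ)) (fun x => x) h, cfc_const_one ℝ h, cfc_id' ℝ h]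
    rw [e, ← cfc_mul _ _ h hc (by fun_prop), ← cfc_mul _ (fun x : ℝ => (√(1 - x))⁻¹ * (1 - x)) h hc (hc.mul (by fun_prop)),
      ← cfc_const_one ℝ h]
    refine cfc_congr fun x hx => ?_
    have h1 := Real.sqrt_pos.mpr (hpos x hx)
    have h2 := Real.mul_self_sqrt (hpos x hx).le
    field_simp
    nlinarith
  · have e : cfc (fun x : ℝ => (√(1 - x))⁻¹) h - 1 = cfc (fun x : ℝ => (√(1 - x))⁻¹ - 1) h := by
      rw [cfc_sub _ (fun _ : ℝ => (1:ℝ)) h hc, cfc_const_one ℝ h]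
    rw [e]
    exact norm_cfc_le (by linarith) fun x hx => stmt9_aux_real x t ht (hsp x hx)

lemma stmt9_aux_norm {B : Type*} [CStarAlgebra B] (q : B) (hq : IsSelfAdjoint q)
    (hqq : q * q = q) : ‖q‖ ≤ 1 := by
  have := CStarRing.norm_star_mul_self (x := q)
  rw [hq.star_eq, hqq] at this
  nlinarith [norm_nonneg q]

lemma stmt9_aux {B : Type*} [CStarAlgebra B] (δ : ℝ) (hδ : δ ≤ 1/2) (p q : B)
    (hp : IsSelfAdjoint p) (hpp : p * p = p) (hq : IsSelfAdjoint q) (hqq : q * q = q)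
    (hpq : ‖q - q * p‖ < δ) :
    ∃ w : B, w * star w = q ∧ (star w * w) * p = star w * w ∧ ‖w - q‖ < 2 * δ := by
  have hq' : ∀ x, q * (q * x) = q * x := fun x => by rw [← mul_assoc, hqq]
  have hp' : ∀ x, p * (p * x) = p * x := fun x => by rw [← mul_assoc, hpp]
  have eh : q - q * (p * q) = (q - q * p) * star (q - q * p) := by
    simp only [star_sub, star_mul, hp.star_eq, hq.star_eq, sub_mul, mul_sub, mul_assoc, hqq, hp']
    abel
  have hn : ‖q - q * (p * q)‖ ≤ δ / 2 := by
    rw [eh, CStarRing.norm_self_mul_star]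
    nlinarith [norm_nonneg (q - q * p)]
  have hsa : IsSelfAdjoint (q - q * (p * q)) := by
    rw [eh]; exact IsSelfAdjoint.mul_star_self _
  have hcomm : Commute (q - q * (p * q)) q := by
    simp only [Commute, SemiconjBy, sub_mul, mul_sub, mul_assoc, hqq, hq']
  obtain ⟨r, hr, hrq, hrh, hr1, hr2⟩ := stmt9_aux_root _ q hsa (δ / 2) (by linarith [norm_nonneg (q - q * p)]) hn hcomm
  refine ⟨r * q * p, ?_, ?_, ?_⟩
  · have e1 : q * (p * q) = (1 - (q - q * (p * q))) * q := by
      simp only [sub_mul, mul_assoc, hqq, one_mul]; abel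
    have hc : Commute r (q * (p * q)) := by
      rw [e1]
      exact ((Commute.one_right r).sub_right hrh).mul_right hrq
    calc r * q * p * star (r * q * p) = r * (q * (p * q) * r) := by
          simp only [star_mul, hp.star_eq, hq.star_eq, hr.star_eq, mul_assoc, hp']
      _ = r * (r * (q * (p * q))) := by rw [hc.eq]
      _ = (r * (r * (1 - (q - q * (p * q))))) * q := by
          simp only [mul_assoc]
          rw [← e1]
      _ = q := by rw [hr1, one_mul]
  · simp only [mul_assoc, hpp]
  · have hn1 : ‖q * p‖ ≤ 1 := (norm_mul_le _ _).trans
      (mul_le_one₀ (stmt9_aux_norm q hq hqq) (norm_nonneg _) (stmt9_aux_norm p hp hpp))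
    have e : r * q * p - q = (r - 1) * (q * p) - (q - q * p) := by
      rw [sub_mul, one_mul, mul_assoc]; abel
    rw [e]
    have h1 := norm_sub_le ((r - 1) * (q * p)) (q - q * p)
    have h2 := norm_mul_le (r - 1) (q * p)
    nlinarith [norm_nonneg (r - 1)]

/-- For every ε > 0 there is δ > 0 such that in any unital C*-algebra, a projection `q`
with `‖q − q·p‖ < δ` (for a projection `p`) admits a partial isometry `w` with
`w·w* = q`, `w*·w ≤ p` and `‖w − q‖ < ε`. The condition `w*·w ≤ p` for projections is
expressed by the equivalent algebraic identity `(w*·w)·p = w*·w`. -/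
theorem stmt9 :
    ∀ ε : ℝ, 0 < ε → ∃ δ : ℝ, 0 < δ ∧
      ∀ (B : Type*) [NormedRing B] [StarRing B] [CStarRing B]
        [NormedAlgebra ℂ B] [StarModule ℂ B] [CompleteSpace B],
        ∀ p q : B, IsSelfAdjoint p → p * p = p → IsSelfAdjoint q → q * q = q →
          ‖q - q * p‖ < δ →
          ∃ w : B, w * star w = q ∧ (star w * w) * p = star w * w ∧ ‖w - q‖ < ε := by
  intro ε hε
  refine ⟨min (1/2) (ε/2), by positivity, ?_⟩
  intro B _ _ _ _ _ _ p q hp hpp hq hqq hpq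
  letI : CStarAlgebra B := { }
  obtain ⟨w, h1, h2, h3⟩ := stmt9_aux (B := B) _ (min_le_left _ _) p q hp hpp hq hqq hpq
  refine ⟨w, h1, h2, h3.trans_le ?_⟩
  linarith [min_le_right (1/2 : ℝ) (ε/2)]
end

section
/- There exists δ with 0 < δ < 1/2 satisfying the following: let H be a separable complex Hilbert space, let N ⊆ M be infinite factors acting on H, let p be a nonzero projection in the commutant N′ of N, and let u be a unitary operator on H such that p̃ := u p u* belongs to M and ‖u − 1‖ < δ. Then p̃ is Murray–von Neumann equivalent to the identity 1 in M. -/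
variable {H : Type*} [NormedAddCommGroup H] [InnerProductSpace ℂ H] [CompleteSpace H]

/-- `p` is a projection (an orthogonal projection operator). -/
def IsProjectionOp (p : H →L[ℂ] H) : Prop := IsSelfAdjoint p ∧ p * p = p

/-- Murray–von Neumann equivalence of `p` and `q` in the von Neumann algebra `M`. -/
def MvNEquiv (M : VonNeumannAlgebra H) (p q : H →L[ℂ] H) : Prop :=
  ∃ v : H →L[ℂ] H, v ∈ M ∧ star v * v = p ∧ v * star v = q

/-- `p` is an infinite projection in `M`: it is Murray–von Neumann equivalent in `M`
to a projection `q ∈ M` with `q ≤ p` (i.e. `q·p = q`) and `q ≠ p`. -/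
def InfiniteProj (M : VonNeumannAlgebra H) (p : H →L[ℂ] H) : Prop :=
  ∃ q : H →L[ℂ] H, q ∈ M ∧ IsProjectionOp q ∧ q * p = q ∧ q ≠ p ∧ MvNEquiv M p q

/-- `M` is a factor: its center consists of scalar multiples of the identity. -/
def IsFactor (M : VonNeumannAlgebra H) : Prop :=
  ∀ x : H →L[ℂ] H, x ∈ M → x ∈ M.commutant → ∃ c : ℂ, x = c • (1 : H →L[ℂ] H)

/-- `M` is an infinite factor: a factor in which `1` is an infinite projection. -/
def InfiniteFactor (M : VonNeumannAlgebra H) : Prop :=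
  IsFactor M ∧ InfiniteProj M 1

namespace Stmt10Aux

/-- The orthogonal projection onto a closed subspace invariant under the commutant lies in `M`. -/
theorem proj_exists (M : VonNeumannAlgebra H) (K : Submodule ℂ H) (hK : IsClosed (K : Set H))
    (hinv : ∀ c ∈ M.commutant, ∀ ξ ∈ K, c ξ ∈ K) :
    ∃ e : H →L[ℂ] H, e ∈ M ∧ star e = e ∧ e * e = e ∧ (∀ ξ, e ξ = ξ ↔ ξ ∈ K) ∧ ∀ ξ, e ξ ∈ K := by
  have : CompleteSpace K := hK.completeSpace_coe
  have hs : IsStarProjection K.starProjection := isStarProjection_starProjection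
  refine ⟨K.starProjection, ?_, hs.isSelfAdjoint.star_eq, hs.isIdempotentElem, ?_, ?_⟩
  · rw [VonNeumannAlgebra.IsStarProjection.mem_iff hs]
    intro y hy
    rw [Submodule.range_starProjection]
    intro ξ hξ
    exact hinv y hy ξ hξ
  · intro ξ
    exact Submodule.starProjection_eq_self_iff
  · intro ξ
    exact Submodule.starProjection_apply_mem _ _

/-- In a factor, a nonzero element has full central support. -/
theorem central_support (M : VonNeumannAlgebra H) (hM : IsFactor M) (a : H →L[ℂ] H) (ha : a ∈ M)
    (ha0 : a ≠ 0) (ξ : H) (hξ : ∀ b ∈ M, a (b ξ) = 0) : ξ = 0 := by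
  let K : Submodule ℂ H :=
    { carrier := {η | ∀ b ∈ M, a (b η) = 0}
      add_mem' := fun {x y} hx hy b hb => by simp [hx b hb, hy b hb]
      zero_mem' := fun b hb => by simp
      smul_mem' := fun c x hx b hb => by simp [hx b hb] }
  have hKmem : ∀ η, η ∈ K ↔ ∀ b ∈ M, a (b η) = 0 := fun η => Iff.rfl
  have hK : IsClosed (K : Set H) := by
    have : (K : Set H) = ⋂ b : H →L[ℂ] H, ⋂ _ : b ∈ M, {η | a (b η) = 0} := by
      ext η; simp [hKmem]
    rw [this]
    exact isClosed_iInter fun b => isClosed_iInter fun _ =>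
      isClosed_eq (by fun_prop) continuous_const
  have h1 : ∀ c ∈ M.commutant, ∀ η ∈ K, c η ∈ K := by
    intro c hc η hη b hb
    rw [VonNeumannAlgebra.mem_commutant_iff] at hc
    have e1 : b (c η) = c (b η) := congrArg (fun f : H →L[ℂ] H => f η) (hc b hb)
    have e2 : a (c (b η)) = c (a (b η)) := congrArg (fun f : H →L[ℂ] H => f (b η)) (hc a ha)
    rw [e1, e2, hη b hb, map_zero]
  have h2 : ∀ c ∈ M, ∀ η ∈ K, c η ∈ K := by
    intro c hc η hη b hb
    exact hη (b * c) (mul_mem hb hc)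
  obtain ⟨e, heM, hes, hee, heK, heK'⟩ := proj_exists M K hK h1
  obtain ⟨f, hfM, hfs, hff, hfK, hfK'⟩ := proj_exists M.commutant K hK
    (by rw [VonNeumannAlgebra.commutant_commutant]; exact h2)
  have h3 : f * e = e := by
    ext η; exact (hfK _).2 (heK' η)
  have h4 : e * f = f := by
    ext η; exact (heK _).2 (hfK' η)
  have hef : e = f := by
    have := congrArg star h3
    rw [star_mul, hes, hfs, h4] at this
    exact this.symm
  obtain ⟨c, hc⟩ := hM e heM (hef ▸ hfM)
  by_cases hc0 : c = 0
  · have : e ξ = ξ := (heK ξ).2 hξ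
    rw [← this, hc, hc0]; simp
  · exfalso
    apply ha0
    ext η
    have : c⁻¹ • e η = η := by rw [hc]; simp [smul_smul, hc0]
    have hη : η ∈ K := by rw [← this]; exact K.smul_mem _ (heK' η)
    simpa using hη 1 (one_mem M)

/-- Cantor–Bernstein: an isometry in `M` with range under `q` gives `q ∼ 1`. -/
theorem cantor_bernstein (M : VonNeumannAlgebra H) (q V : H →L[ℂ] H) (hqM : q ∈ M)
    (hqs : star q = q) (hqq : q * q = q) (hV : V ∈ M) (hVV : star V * V = 1) (hqV : q * V = V) :
    MvNEquiv M q 1 := by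
  have hVs : star V ∈ M := star_mem hV
  let K : Submodule ℂ H :=
    { carrier := {η | ∀ n : ℕ, q ((star V ^ n) η) = (star V ^ n) η}
      add_mem' := fun {x y} hx hy n => by
        rw [map_add, map_add, hx n, hy n]
      zero_mem' := fun n => by simp
      smul_mem' := fun c x hx n => by
        rw [map_smul, map_smul, hx n] }
  have hKmem : ∀ η, η ∈ K ↔ ∀ n : ℕ, q ((star V ^ n) η) = (star V ^ n) η := fun η => Iff.rfl
  have hK : IsClosed (K : Set H) := by
    have : (K : Set H) = ⋂ n : ℕ, {η | q ((star V ^ n) η) = (star V ^ n) η} := by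
      ext η; simp [hKmem]
    rw [this]
    exact isClosed_iInter fun n => isClosed_eq (by fun_prop) (by fun_prop)
  have h1 : ∀ c ∈ M.commutant, ∀ η ∈ K, c η ∈ K := by
    intro c hc η hη n
    rw [VonNeumannAlgebra.mem_commutant_iff] at hc
    have e1 : (star V ^ n) (c η) = c ((star V ^ n) η) :=
      congrArg (fun f : H →L[ℂ] H => f η) (hc (star V ^ n) (pow_mem hVs n))
    have e2 : q (c ((star V ^ n) η)) = c (q ((star V ^ n) η)) :=
      congrArg (fun f : H →L[ℂ] H => f ((star V ^ n) η)) (hc q hqM)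
    rw [e1, e2, hη n]
  obtain ⟨f, hfM, hfs, hff, hfK, hfK'⟩ := proj_exists M K hK h1
  have hKV : ∀ η ∈ K, star V η ∈ K := by
    intro η hη n
    have := hη (n + 1)
    rw [pow_succ] at this
    exact this
  have hKV' : ∀ η, q η = η → star V η ∈ K → η ∈ K := by
    intro η hq hη n
    cases n with
    | zero => simpa using hq
    | succ n => rw [pow_succ]; exact hη n
  have hqf : q * f = f := by
    ext η; simpa using hfK' η 0
  have hfVf : f * (star V * f) = star V * f := by
    ext η; exact (hfK _).2 (hKV _ (hfK' η))
  have hfVf' : (f * V) * f = f * V := by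
    have := congrArg star hfVf
    simpa [star_mul, hfs] using this
  set w : H →L[ℂ] H := V * (1 - f) + f with hw
  have hws : star w = (1 - f) * star V + f := by
    simp [hw, star_mul, hfs]
  have hww : star w * w = 1 := by
    rw [hws, hw]
    have e1 : f * V * (1 - f) = 0 := by rw [mul_sub, hfVf', mul_one, sub_self]
    have e2 : (1 - f) * star V * f = 0 := by
      rw [mul_assoc, sub_mul, one_mul, hfVf, sub_self]
    calc ((1 - f) * star V + f) * (V * (1 - f) + f)
        = (1 - f) * (star V * V) * (1 - f) + (1 - f) * star V * f + f * V * (1 - f) + f * f := by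
          noncomm_ring
      _ = 1 := by
          rw [e1, e2, hVV, hff]
          have : (1 - f) * 1 * (1 - f) = 1 - 2 • f + f * f := by noncomm_ring
          rw [this, hff, two_smul]; abel
  have hqw : q * w = w := by
    rw [hw, mul_add, ← mul_assoc, hqV, hqf]
  have hwq : star w * q = star w := by
    have := congrArg star hqw
    rwa [star_mul, hqs] at this
  have hwM : w ∈ M := add_mem (mul_mem hV (sub_mem (one_mem M) hfM)) hfM
  have hker : ∀ η, q η = η → star w η = 0 → η = 0 := by
    intro η hq h0
    rw [hws] at h0
    have h0' : star V η - f (star V η) + f η = 0 := by simpa using h0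
    have hfη : f η = 0 := by
      have h := congrArg f h0'
      have hff' : ∀ x, f (f x) = f x := fun x => congrArg (fun g : H →L[ℂ] H => g x) hff
      simpa [hff'] using h
    rw [hfη, add_zero, sub_eq_zero] at h0'
    have : η ∈ K := hKV' η hq ((hfK _).1 h0'.symm)
    rw [← (hfK η).2 this, hfη]
  refine ⟨star w, star_mem hwM, ?_, ?_⟩
  · rw [star_star]
    symm
    rw [← sub_eq_zero]
    ext η
    apply hker
    · have : q * (q - w * star w) = q - w * star w := by
        rw [mul_sub, hqq, ← mul_assoc, hqw]
      exact congrArg (fun g : H →L[ℂ] H => g η) this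
    · have : star w * (q - w * star w) = 0 := by
        rw [mul_sub, hwq, ← mul_assoc, hww, one_mul, sub_self]
      exact congrArg (fun g : H →L[ℂ] H => g η) this
  · rw [star_star, hww]

/-- Polar decomposition of an injective element of `M`. -/
theorem polar (M : VonNeumannAlgebra H) (T : H →L[ℂ] H) (hT : T ∈ M)
    (hinj : ∀ ξ, T ξ = 0 → ξ = 0) :
    ∃ V ∈ M, star V * V = 1 ∧ ∀ q : H →L[ℂ] H, q * T = T → q * V = V := by
  set R : H →L[ℂ] H := CFC.abs T with hR
  have hRR : R * R = star T * T := CFC.abs_mul_abs T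
  have hRs : star R = R := (IsSelfAdjoint.of_nonneg (CFC.abs_nonneg T)).star_eq
  have hnorm : ∀ ξ, ‖T ξ‖ = ‖R ξ‖ := by
    intro ξ
    have h1 : ‖T ξ‖ ^ 2 = RCLike.re (inner ℂ ((star T * T) ξ) ξ) :=
      ContinuousLinearMap.apply_norm_sq_eq_inner_adjoint_left T ξ
    have h2 : ‖R ξ‖ ^ 2 = RCLike.re (inner ℂ ((star R * R) ξ) ξ) :=
      ContinuousLinearMap.apply_norm_sq_eq_inner_adjoint_left R ξ
    rw [hRs, hRR, ← h1] at h2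
    exact ((sq_eq_sq₀ (norm_nonneg _) (norm_nonneg _)).1 h2).symm
  have hRinj : ∀ ξ, R ξ = 0 → ξ = 0 := fun ξ h => hinj ξ (by
    rw [← norm_eq_zero, hnorm, h, norm_zero])
  have hdense : DenseRange (R : H →ₗ[ℂ] H) := by
    have h := ContinuousLinearMap.orthogonal_range R
    have hadj : ContinuousLinearMap.adjoint R = R := hRs
    rw [hadj] at h
    have hk : R.ker = ⊥ := by
      rw [eq_bot_iff]; intro x hx; exact hRinj x hx
    rw [hk, ← Submodule.topologicalClosure_eq_top_iff,
      ← Submodule.dense_iff_topologicalClosure_eq_top] at h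
    exact h
  have hb : ∃ C : ℝ, ∀ x, ‖(T : H →ₗ[ℂ] H) x‖ ≤ C * ‖(R : H →ₗ[ℂ] H) x‖ :=
    ⟨1, fun x => by rw [one_mul]; exact (hnorm x).le⟩
  set V : H →L[ℂ] H := (T : H →ₗ[ℂ] H).extendOfNorm (R : H →ₗ[ℂ] H) with hV
  have hVR : ∀ x, V (R x) = T x := fun x => LinearMap.extendOfNorm_eq hdense hb x
  have hagree : ∀ A B : H →L[ℂ] H, (∀ x, A (R x) = B (R x)) → A = B := by
    intro A B hAB
    ext y
    refine congrFun (hdense.equalizer A.continuous B.continuous ?_) y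
    funext x; exact hAB x
  refine ⟨V, ?_, ?_, ?_⟩
  · rw [← VonNeumannAlgebra.commutant_commutant M, VonNeumannAlgebra.mem_commutant_iff]
    intro c hc
    have hc' := VonNeumannAlgebra.mem_commutant_iff.1 hc
    have cT : Commute c T := (hc' T hT).symm
    have cT' : Commute T (star c) :=
      VonNeumannAlgebra.mem_commutant_iff.1 (star_mem hc) T hT
    have cR : c * R = R * c := (Commute.cfcAbs_right cT.symm cT').eq
    apply hagree
    intro x
    have e1 : c (R x) = R (c x) := congrArg (fun g : H →L[ℂ] H => g x) cR
    have e2 : c (T x) = T (c x) := congrArg (fun g : H →L[ℂ] H => g x) cT.eq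
    show c (V (R x)) = V (c (R x))
    rw [e1, hVR, hVR, e2]
  · have hiso : ∀ y, ‖V y‖ = ‖y‖ := by
      intro y
      refine hdense.induction_on (p := fun y => ‖V y‖ = ‖y‖) y
        (isClosed_eq (by fun_prop) (by fun_prop)) ?_
      intro x
      show ‖V (R x)‖ = ‖R x‖
      rw [hVR, hnorm]
    exact (ContinuousLinearMap.norm_map_iff_adjoint_comp_self V).1 hiso
  · intro q hq
    apply hagree
    intro x
    show q (V (R x)) = V (R x)
    rw [hVR]
    exact congrArg (fun g : H →L[ℂ] H => g x) hq

/-- A countable separating family. -/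
theorem countable_family [TopologicalSpace.SeparableSpace H] (M : VonNeumannAlgebra H)
    (hM : IsFactor M) (e : H →L[ℂ] H) (he : e ∈ M) (he0 : e ≠ 0) :
    ∃ a : ℕ → (H →L[ℂ] H), (∀ n, a n ∈ M) ∧ ∀ ξ, (∀ n, e (a n ξ) = 0) → ξ = 0 := by
  have : SecondCountableTopology H := UniformSpace.secondCountable_of_separable H
  obtain ⟨S, hS, hSU⟩ := TopologicalSpace.isOpen_iUnion_countable
    (fun b : M => {ξ : H | e (b.1 ξ) ≠ 0})
    (fun b => isOpen_ne_fun (by fun_prop) continuous_const)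
  obtain ⟨g, hg⟩ := (hS.insert (1 : M)).exists_eq_range (Set.insert_nonempty _ _)
  refine ⟨fun n => (g n).1, fun n => (g n).2, ?_⟩
  intro ξ hξ
  apply central_support M hM e he he0
  intro b hb
  by_contra hne
  have h1 : ξ ∈ ⋃ b : M, {ξ : H | e (b.1 ξ) ≠ 0} := Set.mem_iUnion.2 ⟨⟨b, hb⟩, hne⟩
  rw [← hSU] at h1
  simp only [Set.mem_iUnion] at h1
  obtain ⟨i, hi, hi'⟩ := h1
  have h2 : i ∈ Set.range g := hg ▸ Set.mem_insert_of_mem _ hi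
  obtain ⟨n, rfl⟩ := h2
  exact hi' (hξ n)

theorem isClosed_vN (M : VonNeumannAlgebra H) : IsClosed (M : Set (H →L[ℂ] H)) := by
  rw [← VonNeumannAlgebra.centralizer_centralizer M]
  exact Set.isClosed_centralizer _

theorem smul_mem_vN (M : VonNeumannAlgebra H) (c : ℂ) {x : H →L[ℂ] H} (hx : x ∈ M) :
    c • x ∈ M := M.toStarSubalgebra.smul_mem hx c

/-- Construction of an injective operator with range under `q`. -/
theorem injective_op [TopologicalSpace.SeparableSpace H] (M : VonNeumannAlgebra H)
    (hM : IsFactor M) (q A e L : H →L[ℂ] H) (hA : A ∈ M) (he : e ∈ M)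
    (he0 : e ≠ 0) (hee : e * e = e) (heA : e * A = 0) (hLA : L * A = 1) (hqe : q * e = e)
    (hqA : q * A = A * q) :
    ∃ T ∈ M, q * T = T ∧ ∀ ξ, T ξ = 0 → ξ = 0 := by
  obtain ⟨a, haM, ha⟩ := countable_family M hM e he he0
  let c : ℕ → ℝ := fun n => (1 / 2) ^ n * (1 + ‖A ^ n * e * a n‖)⁻¹
  have hc : ∀ n, 0 < c n := fun n => by positivity
  let t : ℕ → (H →L[ℂ] H) := fun n => (c n : ℂ) • (A ^ n * e * a n)
  have htn : ∀ n, ‖t n‖ ≤ (1 / 2) ^ n := by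
    intro n
    have h0 : (0:ℝ) ≤ ‖A ^ n * e * a n‖ := norm_nonneg _
    rw [norm_smul, Complex.norm_real, Real.norm_of_nonneg (hc n).le]
    show (1 / 2) ^ n * (1 + ‖A ^ n * e * a n‖)⁻¹ * ‖A ^ n * e * a n‖ ≤ (1 / 2) ^ n
    rw [mul_assoc]
    apply mul_le_of_le_one_right (by positivity)
    rw [inv_mul_le_iff₀ (by positivity)]
    linarith
  have hsum : Summable t := Summable.of_norm_bounded summable_geometric_two htn
  obtain ⟨T, hT⟩ := hsum
  have htM : ∀ n, t n ∈ M := fun n =>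
    smul_mem_vN M _ (mul_mem (mul_mem (pow_mem hA n) he) (haM n))
  have hqt : ∀ n, q * t n = t n := by
    intro n
    have h1 : q * A ^ n = A ^ n * q := (Commute.pow_right (show Commute q A from hqA) n).eq
    show q * ((c n : ℂ) • (A ^ n * e * a n)) = _
    rw [mul_smul_comm, ← mul_assoc, ← mul_assoc, h1, mul_assoc (A ^ n), hqe]
  refine ⟨T, ?_, ?_, ?_⟩
  · refine (isClosed_vN M).mem_of_tendsto hT (Filter.Eventually.of_forall fun s => ?_)
    exact sum_mem fun n _ => htM n
  · have h1 := hT.mul_left q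
    simp only [hqt] at h1
    exact h1.unique hT
  · intro ξ hξ
    apply ha
    intro n
    induction n using Nat.strong_induction_on with
    | _ n ih =>
      have hLn : ∀ n : ℕ, L ^ n * A ^ n = 1 := by
        intro n
        induction n with
        | zero => simp
        | succ n ihn =>
          rw [pow_succ, pow_succ', mul_assoc, ← mul_assoc L, hLA, one_mul, ihn]
      have h1 := (hT.mul_left (e * L ^ n)).mapL (ContinuousLinearMap.apply ℂ H ξ)
      have h2 : ∀ k, k ≠ n → (ContinuousLinearMap.apply ℂ H ξ) (e * L ^ n * t k) = 0 := by
        intro k hk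
        rcases lt_or_gt_of_ne hk with hlt | hgt
        · have := ih k hlt
          show e ((L ^ n) ((c k : ℂ) • ((A ^ k) (e (a k ξ))))) = 0
          rw [this]; simp
        · obtain ⟨j, rfl⟩ := Nat.exists_eq_add_of_lt hgt
          have h3 : e * L ^ n * (A ^ (n + j + 1) * e * a (n + j + 1)) = 0 := by
            rw [add_assoc, pow_add, pow_succ']
            calc e * L ^ n * (A ^ n * (A * A ^ j) * e * a (n + (j + 1)))
                = e * (L ^ n * A ^ n) * A * (A ^ j * e * a (n + (j + 1))) := by
                  simp only [mul_assoc]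
              _ = 0 := by rw [hLn, mul_one, heA, zero_mul]
          have h4 : e * L ^ n * t (n + j + 1) = 0 := by
            show e * L ^ n * ((c (n + j + 1) : ℂ) • (A ^ (n + j + 1) * e * a (n + j + 1))) = 0
            rw [mul_smul_comm, h3, smul_zero]
          rw [h4, map_zero]
      have h5 := h1.unique (hasSum_single n h2)
      have h6 : e * L ^ n * t n = (c n : ℂ) • (e * a n) := by
        show e * L ^ n * ((c n : ℂ) • (A ^ n * e * a n)) = _
        rw [mul_smul_comm]
        congr 1
        calc e * L ^ n * (A ^ n * e * a n) = e * (L ^ n * A ^ n) * e * a n := by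
              simp only [mul_assoc]
          _ = _ := by rw [hLn, mul_one, hee]
      rw [h6] at h5
      have h7 : e ((L ^ n) (T ξ)) = (c n : ℂ) • e (a n ξ) := h5
      rw [hξ, map_zero, map_zero] at h7
      have h8 : (c n : ℂ) ≠ 0 := by exact_mod_cast (hc n).ne'
      exact (smul_eq_zero.1 h7.symm).resolve_left h8

theorem commutant_factor (N : VonNeumannAlgebra H) (hN : IsFactor N) : IsFactor N.commutant := by
  intro x hx hx'
  rw [VonNeumannAlgebra.commutant_commutant] at hx'
  exact hN x hx' hx

theorem norm_le_one_of_isometry (v : H →L[ℂ] H) (hv : star v * v = 1) : ‖v‖ ≤ 1 := by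
  refine v.opNorm_le_bound zero_le_one fun x => ?_
  rw [one_mul]
  exact ((ContinuousLinearMap.norm_map_iff_adjoint_comp_self v).2 hv x).le

theorem norm_le_one_of_proj (p : H →L[ℂ] H) (hs : star p = p) (hp : p * p = p) : ‖p‖ ≤ 1 := by
  have h : ‖star p * p‖ = ‖p‖ * ‖p‖ := CStarRing.norm_star_mul_self
  rw [hs, hp] at h
  by_contra hlt
  push Not at hlt
  nlinarith

theorem main [TopologicalSpace.SeparableSpace H] (N M : VonNeumannAlgebra H)
    (hNM : ∀ x : H →L[ℂ] H, x ∈ N → x ∈ M) (hN : InfiniteFactor N) (hM : InfiniteFactor M)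
    (p : H →L[ℂ] H) (hp : IsProjectionOp p) (hp0 : p ≠ 0) (hpN : p ∈ N.commutant)
    (q : H →L[ℂ] H) (hqs : star q = q) (hqq : q * q = q) (hqM : q ∈ M)
    (hpq : ‖p - q‖ < 1 / 3) : MvNEquiv M q 1 := by
  obtain ⟨hps, hpp⟩ := hp
  have hps : star p = p := hps
  obtain ⟨hNf, r, hrN, ⟨hrs, hrr⟩, -, hr1, v, hvN, hvv, hvr⟩ := hN
  have hpv : v * p = p * v := VonNeumannAlgebra.mem_commutant_iff.1 hpN v hvN
  have hpv' : star v * p = p * star v :=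
    VonNeumannAlgebra.mem_commutant_iff.1 hpN _ (star_mem hvN)
  have hfp0 : p * (1 - r) ≠ 0 := by
    intro h0
    apply hr1
    symm
    rw [← sub_eq_zero]
    ext η
    refine central_support N.commutant (commutant_factor N hNf) p hpN hp0 _ ?_
    intro b hb
    have hb' : (1 - r) * b = b * (1 - r) :=
      VonNeumannAlgebra.mem_commutant_iff.1 hb _ (sub_mem (one_mem N) hrN)
    have : p * (b * (1 - r)) = 0 := by rw [← hb', ← mul_assoc, h0, zero_mul]
    exact congrArg (fun g : H →L[ℂ] H => g η) this
  set A : H →L[ℂ] H := q * v * q + (1 - q) with hAdef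
  set B : H →L[ℂ] H := v * p + (1 - p) with hBdef
  have hBs : star B = star v * p + (1 - p) := by
    rw [hBdef, star_add, star_mul, hps, star_sub, star_one, hps, hpv']
  have hBB : star B * B = 1 := by
    rw [hBs, hBdef]
    have e1 : star v * p * (v * p) = p := by
      rw [hpv, mul_assoc, ← mul_assoc p, hpp, ← hpv, ← mul_assoc, hvv, one_mul]
    have e2 : star v * p * (1 - p) = 0 := by rw [mul_assoc, mul_sub, mul_one, hpp, sub_self, mul_zero]
    have e3 : (1 - p) * (v * p) = 0 := by
      rw [hpv, ← mul_assoc, sub_mul, one_mul, hpp, sub_self, zero_mul]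
    have e4 : (1 - p) * (1 - p) = 1 - p := by
      rw [mul_sub, mul_one, sub_mul, one_mul, hpp, sub_self, sub_zero]
    rw [add_mul, mul_add, mul_add, e1, e2, e3, e4]; abel
  have hBf : star B * (p * (1 - r)) = 0 := by
    rw [hBs, add_mul]
    have e1 : (1 - p) * (p * (1 - r)) = 0 := by
      rw [← mul_assoc, sub_mul, one_mul, hpp, sub_self, zero_mul]
    have e2 : star v * p * (p * (1 - r)) = 0 := by
      have : star v * (1 - r) = 0 := by
        rw [← hvr, mul_sub, mul_one, ← mul_assoc, hvv, one_mul, sub_self]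
      rw [mul_assoc, ← mul_assoc p, hpp, ← mul_assoc, hpv', mul_assoc, this, mul_zero]
    rw [e1, e2, add_zero]
  have hnv := norm_le_one_of_isometry v hvv
  have hnB := norm_le_one_of_isometry B hBB
  have hnq := norm_le_one_of_proj q hqs hqq
  have hnp := norm_le_one_of_proj p hps hpp
  have hBA : ‖B - A‖ < 1 := by
    have h1 : B - A = (p - q) * (v * p) + q * v * (p - q) - (p - q) := by
      have : v * p = p * (v * p) := by rw [hpv, ← mul_assoc, hpp]
      rw [hBdef, hAdef]
      nth_rewrite 1 [this]
      noncomm_ring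
    have h2 : ‖(p - q) * (v * p)‖ ≤ ‖p - q‖ := by
      refine (norm_mul_le _ _).trans (mul_le_of_le_one_right (norm_nonneg _) ?_)
      exact (norm_mul_le _ _).trans (mul_le_one₀ hnv (norm_nonneg _) hnp)
    have h3 : ‖q * v * (p - q)‖ ≤ ‖p - q‖ := by
      refine (norm_mul_le _ _).trans (mul_le_of_le_one_left (norm_nonneg _) ?_)
      exact (norm_mul_le _ _).trans (mul_le_one₀ hnq (norm_nonneg _) hnv)
    rw [h1]
    have h4 := norm_sub_le ((p - q) * (v * p) + q * v * (p - q)) (p - q)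
    have h5 := norm_add_le ((p - q) * (v * p)) (q * v * (p - q))
    linarith
  have hunit : IsUnit (star B * A) := by
    have h1 : ‖star B * (B - A)‖ < 1 := by
      refine lt_of_le_of_lt ((norm_mul_le _ _).trans ?_) hBA
      rw [norm_star]
      exact mul_le_of_le_one_left (norm_nonneg _) hnB
    have h2 := isUnit_one_sub_of_norm_lt_one h1
    rwa [mul_sub, hBB, sub_sub_cancel] at h2
  obtain ⟨D, hD⟩ := hunit.exists_left_inv
  obtain ⟨D', hD'⟩ := hunit.exists_right_inv
  have hDD : D = D' := left_inv_eq_right_inv hD hD'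
  subst hDD
  have hvM := hNM v hvN
  have hAM : A ∈ M := add_mem (mul_mem (mul_mem hqM hvM) hqM) (sub_mem (one_mem M) hqM)
  have hAsM : star A ∈ M := star_mem hAM
  have hqA : q * A = A * q := by
    have e1 : q * A = q * v * q := by
      rw [hAdef, mul_add, mul_sub, mul_one, hqq, sub_self, add_zero, ← mul_assoc, ← mul_assoc, hqq]
    have e2 : A * q = q * v * q := by
      rw [hAdef, add_mul, sub_mul, one_mul, hqq, sub_self, add_zero, mul_assoc, hqq]
    rw [e1, e2]
  have h1q : (1 - q) * star A = 1 - q := by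
    have : A * (1 - q) = 1 - q := by
      have e0 : q * (1 - q) = 0 := by rw [mul_sub, mul_one, hqq, sub_self]
      rw [hAdef, add_mul, mul_assoc, e0, mul_zero, zero_add, sub_mul, one_mul, e0, sub_zero]
    have h := congrArg star this
    rwa [star_mul, star_sub, star_one, hqs] at h
  let K : Submodule ℂ H := (star A : H →L[ℂ] H).ker
  obtain ⟨e, heM, hes, hee, heK, heK'⟩ := proj_exists M K
    (ContinuousLinearMap.isClosed_ker _) (by
      intro c hc ξ hξ
      have h1 : star A (c ξ) = c (star A ξ) := congrArg (fun g : H →L[ℂ] H => g ξ)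
        (VonNeumannAlgebra.mem_commutant_iff.1 hc _ hAsM)
      have h2 : star A ξ = 0 := hξ
      show star A (c ξ) = 0
      rw [h1, h2, map_zero])
  have hAe : star A * e = 0 := by
    ext ξ; exact heK' ξ
  have heA : e * A = 0 := by
    have h := congrArg star hAe
    rwa [star_mul, star_star, hes, star_zero] at h
  have hqe : q * e = e := by
    have h : (1 - q) * e = 0 := by rw [← h1q, mul_assoc, hAe, mul_zero]
    rw [sub_mul, one_mul, sub_eq_zero] at h
    exact h.symm
  have he0 : e ≠ 0 := by
    intro he
    have hinj : ∀ ξ, star A ξ = 0 → ξ = 0 := by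
      intro ξ hξ
      rw [← (heK ξ).2 hξ, he]; rfl
    have h1 : star A * B * star D = 1 := by
      have h := congrArg star hD
      rw [star_mul, star_mul, star_star, star_one] at h
      exact h
    have h2 : B * star D * star A = 1 := by
      rw [← sub_eq_zero]
      ext ξ
      apply hinj
      have h3 : star A * (B * star D * star A - 1) = 0 := by
        rw [mul_sub, mul_one, ← mul_assoc, ← mul_assoc, h1, one_mul, sub_self]
      exact congrArg (fun g : H →L[ℂ] H => g ξ) h3
    have h4 : A * D * star B = 1 := by
      have h := congrArg star h2
      rw [star_mul, star_mul, star_star, star_star, star_one, ← mul_assoc] at h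
      exact h
    apply hfp0
    calc p * (1 - r) = A * D * star B * (p * (1 - r)) := by rw [h4, one_mul]
      _ = 0 := by rw [mul_assoc, hBf, mul_zero]
  obtain ⟨T, hTM, hqT, hTinj⟩ := injective_op M hM.1 q A e (D * star B) hAM heM he0 hee heA
    (by rw [mul_assoc, hD]) hqe hqA
  obtain ⟨V, hVM, hVV, hV⟩ := polar M T hTM hTinj
  exact cantor_bernstein M q V hqM hqs hqq hVM hVV (hV q hqT)

end Stmt10Aux

theorem stmt10 :
    ∃ δ : ℝ, 0 < δ ∧ δ < 1 / 2 ∧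
      ∀ (H : Type*) [NormedAddCommGroup H] [InnerProductSpace ℂ H] [CompleteSpace H]
        [TopologicalSpace.SeparableSpace H],
        ∀ N M : VonNeumannAlgebra H,
          (∀ x : H →L[ℂ] H, x ∈ N → x ∈ M) →
          InfiniteFactor N → InfiniteFactor M →
          ∀ p : H →L[ℂ] H, IsProjectionOp p → p ≠ 0 → p ∈ N.commutant →
          ∀ u : H →L[ℂ] H, star u * u = 1 → u * star u = 1 →
            u * p * star u ∈ M → ‖u - 1‖ < δ →
            MvNEquiv M (u * p * star u) 1 := by
  refine ⟨1 / 6, by norm_num, by norm_num, ?_⟩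
  intro H _ _ _ _ N M hNM hN hM p hp hp0 hpN u hu hu' hqM hδ
  have hps : star p = p := hp.1
  refine Stmt10Aux.main N M hNM hN hM p hp hp0 hpN _ ?_ ?_ hqM ?_
  · rw [star_mul, star_mul, star_star, hps, mul_assoc]
  · calc u * p * star u * (u * p * star u) = u * p * (star u * u) * p * star u := by
          simp only [mul_assoc]
      _ = u * p * star u := by rw [hu, mul_one, mul_assoc u, hp.2]
  · have h1 : p - u * p * star u = (p * (star u * u) - u * p * star u * 1) + 0 := by
      rw [hu, mul_one, mul_one, add_zero]
    have hnp := Stmt10Aux.norm_le_one_of_proj p hps hp.2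
    have hnu := Stmt10Aux.norm_le_one_of_isometry u hu
    have hnu' : ‖star u‖ ≤ 1 := by rw [norm_star]; exact hnu
    have hs : ‖star u - 1‖ = ‖u - 1‖ := by
      rw [← norm_star (u - 1), star_sub, star_one]
    have h2 : p - u * p * star u = -((u - 1) * (p * star u)) - p * (star u - 1) := by
      noncomm_ring
    have h3 : ‖(u - 1) * (p * star u)‖ ≤ ‖u - 1‖ := by
      refine (norm_mul_le _ _).trans (mul_le_of_le_one_right (norm_nonneg _) ?_)
      exact (norm_mul_le _ _).trans (mul_le_one₀ hnp (norm_nonneg _) hnu')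
    have h4 : ‖p * (star u - 1)‖ ≤ ‖u - 1‖ := by
      rw [← hs]
      exact (norm_mul_le _ _).trans (mul_le_of_le_one_left (norm_nonneg _) hnp)
    rw [h2]
    have h5 := norm_sub_le (-((u - 1) * (p * star u))) (p * (star u - 1))
    rw [norm_neg] at h5
    linarith
end

section
/- Let N, M, R be von Neumann algebras acting on a complex Hilbert space H with N ⊆ R, M ⊆ R and N ⊆ M′. Suppose M is an infinite factor. Then every nonzero projection in N is infinite in R. -/
variable {H : Type*} [NormedAddCommGroup H] [InnerProductSpace ℂ H] [CompleteSpace H]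

/-- In a factor `M`, if `e ∈ M` and `p ∈ M.commutant` satisfy `p * e = 0` and `p ≠ 0`, then `e = 0`. -/
theorem factor_mul_eq_zero (M : VonNeumannAlgebra H) (hM : IsFactor M)
    (p e : H →L[ℂ] H) (hp : p ∈ M.commutant) (he : e ∈ M) (hne : p ≠ 0)
    (h : p * e = 0) : e = 0 := by
  -- the closed subspace of vectors killed by `p * y` for all `y ∈ M.commutant`
  let K : Submodule ℂ H := ⨅ y : M.commutant, (p * (y : H →L[ℂ] H)).ker
  have memK : ∀ x : H, x ∈ K ↔ ∀ y ∈ M.commutant, p (y x) = 0 := by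
    intro x
    simp [K, Submodule.mem_iInf]
  have hclosed : IsClosed (K : Set H) := by
    simp only [K, Submodule.coe_iInf]
    exact isClosed_iInter fun y => (p * (y : H →L[ℂ] H)).isClosed_ker
  have : CompleteSpace K := hclosed.completeSpace_coe
  have hz : IsStarProjection K.starProjection := isStarProjection_starProjection
  have hrange : K.starProjection.range = K := Submodule.range_starProjection K
  have hzM : K.starProjection ∈ M := by
    rw [VonNeumannAlgebra.IsStarProjection.mem_iff hz]
    intro y hy
    rw [hrange, Module.End.mem_invtSubmodule]
    intro x hx
    rw [Submodule.mem_comap]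
    refine (memK _).2 fun y' hy' => ?_
    exact (memK x).1 hx (y' * y) (mul_mem hy' hy)
  have hzM' : K.starProjection ∈ M.commutant := by
    rw [VonNeumannAlgebra.IsStarProjection.mem_iff hz]
    intro m hm
    rw [VonNeumannAlgebra.commutant_commutant] at hm
    rw [hrange, Module.End.mem_invtSubmodule]
    intro x hx
    rw [Submodule.mem_comap]
    refine (memK _).2 fun y hy => ?_
    have h1 := congrArg (fun f : H →L[ℂ] H => f x)
      (VonNeumannAlgebra.mem_commutant_iff.1 (mul_mem hp hy) m hm)
    have h2 := (memK x).1 hx y hy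
    have h3 : m (p (y x)) = p (y (m x)) := h1
    rw [h2, map_zero] at h3
    exact h3.symm
  obtain ⟨c, hc⟩ := hM _ hzM hzM'
  have hK : ∀ x, p (K.starProjection x) = 0 := fun x =>
    (memK _).1 (K.starProjection_apply_mem x) 1 (one_mem _)
  have hc0 : c = 0 := by
    by_contra hc0
    apply hne
    ext x
    have := hK x
    rw [hc] at this
    simpa [hc0] using this
  ext x
  have hex : e x ∈ K := by
    refine (memK _).2 fun y hy => ?_
    have h1 : e (y x) = y (e x) := congrArg (fun f : H →L[ℂ] H => f x)
      (VonNeumannAlgebra.mem_commutant_iff.1 hy e he)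
    rw [← h1]
    exact congrArg (fun f : H →L[ℂ] H => f (y x)) h
  have h2 : K.starProjection (e x) = e x := Submodule.starProjection_eq_self_iff.2 hex
  rw [hc, hc0] at h2
  simpa using h2.symm

theorem stmt11 (N M R : VonNeumannAlgebra H)
    (hNR : ∀ x : H →L[ℂ] H, x ∈ N → x ∈ R) (hMR : ∀ x : H →L[ℂ] H, x ∈ M → x ∈ R)
    (hNM : ∀ x : H →L[ℂ] H, x ∈ N → x ∈ M.commutant)
    (hM : InfiniteFactor M)
    (p : H →L[ℂ] H) (hpN : p ∈ N) (hproj : IsProjectionOp p) (hne : p ≠ 0) :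
    InfiniteProj R p := by
  obtain ⟨hF, q, hqM, ⟨hqs, hqq⟩, -, hq1, v, hvM, hvv, hvq⟩ := hM
  obtain ⟨hps, hpp⟩ := hproj
  have hpM := hNM p hpN
  have hcomm := VonNeumannAlgebra.mem_commutant_iff.1 hpM
  have hsp : star p = p := hps
  have hsq : star q = q := hqs
  have hqp := hcomm q hqM
  have hvp := hcomm v hvM
  refine ⟨p * q, mul_mem (hNR p hpN) (hMR q hqM), ⟨?_, ?_⟩, ?_, ?_, v * p,
    mul_mem (hMR v hvM) (hNR p hpN), ?_, ?_⟩
  · change star (p * q) = p * q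
    rw [star_mul, hsp, hsq, hqp]
  · rw [mul_assoc, ← mul_assoc q p q, hqp, mul_assoc p q q, hqq, ← mul_assoc, hpp]
  · rw [mul_assoc, hqp, ← mul_assoc, hpp]
  · intro h
    apply hq1
    have h0 : p * (1 - q) = 0 := by rw [mul_sub, mul_one, h, sub_self]
    exact (sub_eq_zero.1
      (factor_mul_eq_zero M hF p (1 - q) hpM (sub_mem (one_mem _) hqM) hne h0)).symm
  · rw [star_mul, hsp, mul_assoc, ← mul_assoc (star v), hvv, one_mul, hpp]
  · rw [star_mul, hsp, mul_assoc, ← mul_assoc p p, hpp, ← mul_assoc, hvp, mul_assoc, hvq]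
end

section
/- Let N, M, R be von Neumann algebras acting on a separable complex Hilbert space H with N ⊆ R, M ⊆ R and N ⊆ M′. Suppose M is an infinite factor and R is a factor. Let w be a unitary operator on H and let u ∈ N be an isometry (u*·u = 1) such that w*·u·u*·w ∈ N. Then there exists a unitary operator W on H such that (W·u*)·x·(W·u*)* = (u*·w)·x·(u*·w)* for all x in the commutant R′ of R. -/
variable {H : Type*} [NormedAddCommGroup H] [InnerProductSpace ℂ H] [CompleteSpace H]

theorem aux_mem (R : VonNeumannAlgebra H) (x : H →L[ℂ] H)
    (h : ∀ y ∈ R.commutant, y * x = x * y) : x ∈ R := by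
  rw [← R.commutant_commutant, VonNeumannAlgebra.mem_commutant_iff]
  exact h

theorem aux_comm {R : VonNeumannAlgebra H} {x y : H →L[ℂ] H} (hx : x ∈ R)
    (hy : y ∈ R.commutant) : y * x = x * y :=
  ((VonNeumannAlgebra.mem_commutant_iff.1 hy) x hx).symm

/-- The orthogonal projection onto a closed subspace invariant under the commutant is in `R`. -/
theorem aux_proj (R : VonNeumannAlgebra H) (K : Submodule ℂ H) [K.HasOrthogonalProjection]
    (h : ∀ y ∈ R.commutant, ∀ x ∈ K, y x ∈ K) : K.starProjection ∈ R := by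
  rw [VonNeumannAlgebra.IsStarProjection.mem_iff isStarProjection_starProjection]
  intro y hy
  rw [Submodule.range_starProjection]
  intro x hx
  exact h y hy x hx

theorem aux_factor (R : VonNeumannAlgebra H) (hR : IsFactor R) (e : H →L[ℂ] H) (he : e ∈ R)
    (he0 : e ≠ 0) (x : H) (hx : ∀ a ∈ R, e (a x) = 0) : x = 0 := by
  let K : Submodule ℂ H := ⨅ a : R, (e * (a : H →L[ℂ] H)).ker
  have hK : ∀ z, z ∈ K ↔ ∀ a ∈ R, e (a z) = 0 := by
    intro z
    simp [K, Submodule.mem_iInf]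
  have hcl : IsClosed (K : Set H) := by
    simp only [K, Submodule.coe_iInf]
    exact isClosed_iInter fun a => ContinuousLinearMap.isClosed_ker _
  have : CompleteSpace K := hcl.completeSpace_coe
  have h1 : K.starProjection ∈ R := by
    apply aux_proj
    intro y hy z hz
    rw [hK] at hz ⊢
    intro a ha
    have h := aux_comm (mul_mem he ha) hy
    have this : y (e (a z)) = e (a (y z)) := congrArg (fun T : H →L[ℂ] H => T z) h
    rw [← this, hz a ha, map_zero]
  have h2 : K.starProjection ∈ R.commutant := by
    apply aux_proj
    intro y hy z hz
    rw [R.commutant_commutant] at hy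
    rw [hK] at hz ⊢
    intro a ha
    exact hz (a * y) (mul_mem ha hy)
  obtain ⟨c, hc⟩ := hR _ h1 h2
  have hxK : x ∈ K := (hK x).2 hx
  have hproj : ∀ z, K.starProjection z = c • z := fun z => by rw [hc]; simp
  by_contra hx0
  apply he0
  ext z
  have hc1 : c = 1 := by
    have h := hproj x
    rw [Submodule.starProjection_eq_self_iff.2 hxK] at h
    have h3 : (c - 1) • x = 0 := by rw [sub_smul, ← h, one_smul, sub_self]
    rcases smul_eq_zero.1 h3 with h | h
    · exact sub_eq_zero.1 h
    · exact absurd h hx0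
  have hz : z ∈ K := by
    rw [← Submodule.starProjection_eq_self_iff, hproj, hc1, one_smul]
  simpa using (hK z).1 hz 1 (one_mem _)

/-- The isometric part of the polar decomposition of an injective operator. -/
theorem aux_polar (R : VonNeumannAlgebra H) (X : H →L[ℂ] H) (hX : X ∈ R)
    (hinj : ∀ x, X x = 0 → x = 0) (q : H →L[ℂ] H) (hq : q * X = X) :
    ∃ T ∈ R, star T * T = 1 ∧ q * T = T := by
  let A : H →L[ℂ] H := CFC.abs X
  have hAsa : star A = A := (IsSelfAdjoint.of_nonneg (CFC.abs_nonneg X)).star_eq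
  have hAA : star A * A = star X * X := by rw [hAsa]; exact CFC.abs_mul_abs X
  have hnorm : ∀ x, ‖X x‖ = ‖A x‖ := by
    intro x
    have key : ∀ B : H →L[ℂ] H, (inner ℂ ((star B * B) x) x : ℂ) = (‖B x‖ : ℂ) ^ 2 := by
      intro B
      change (inner ℂ ((star B) (B x)) x : ℂ) = _
      rw [ContinuousLinearMap.star_eq_adjoint,
        ContinuousLinearMap.adjoint_inner_left, inner_self_eq_norm_sq_to_K]
      rfl
    have h := (key X).symm.trans ((by rw [hAA] : _ = _).trans (key A))
    have h' : ‖X x‖ ^ 2 = ‖A x‖ ^ 2 := by exact_mod_cast h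
    exact (pow_left_inj₀ (norm_nonneg _) (norm_nonneg _) two_ne_zero).1 h'
  have hAinj : ∀ x, A x = 0 → x = 0 := by
    intro x hx
    apply hinj
    rw [← norm_eq_zero, hnorm, hx, norm_zero]
  have hdense : DenseRange A := by
    have h : (A.range : Submodule ℂ H).topologicalClosure = ⊤ := by
      rw [Submodule.topologicalClosure_eq_top_iff, ContinuousLinearMap.orthogonal_range,
        ← ContinuousLinearMap.star_eq_adjoint, hAsa, Submodule.eq_bot_iff]
      intro x hx
      exact hAinj x hx
    have h2 := Submodule.dense_iff_topologicalClosure_eq_top.2 h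
    exact h2
  let T : H →L[ℂ] H := (X : H →ₗ[ℂ] H).extendOfNorm (A : H →ₗ[ℂ] H)
  have hT : ∀ x, T (A x) = X x := fun x =>
    LinearMap.extendOfNorm_eq (f := (X : H →ₗ[ℂ] H)) (e := (A : H →ₗ[ℂ] H)) hdense
      ⟨1, fun x => by simp [hnorm]⟩ x
  have hext : ∀ B C : H →L[ℂ] H, (∀ x, B (A x) = C (A x)) → B = C := by
    intro B C h
    apply DFunLike.coe_injective
    exact hdense.equalizer B.continuous C.continuous (funext h)
  refine ⟨T, ?_, ?_, ?_⟩
  · apply aux_mem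
    intro y hy
    apply hext
    intro x
    have c1 : Commute y X := aux_comm hX hy
    have c2' : Commute (star y) X := aux_comm hX (star_mem hy)
    have c3 : y * A = A * y := (Commute.cfcAbs_left c1.symm c2'.symm).symm.eq
    have e1 : y (A x) = A (y x) := congrArg (fun B : H →L[ℂ] H => B x) c3
    have e2 : y (X x) = X (y x) := congrArg (fun B : H →L[ℂ] H => B x) c1.eq
    change y (T (A x)) = T (y (A x))
    rw [hT, e1, hT, e2]
  · have := (ContinuousLinearMap.norm_map_iff_adjoint_comp_self T).1 (by
      intro x
      refine hdense.induction_on (p := fun x => ‖T x‖ = ‖x‖) x ?_ ?_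
      · exact isClosed_eq (by fun_prop) (by fun_prop)
      · intro a
        rw [hT, hnorm])
    exact this
  · apply hext
    intro x
    change q (T (A x)) = T (A x)
    rw [hT]
    exact congrArg (fun B : H →L[ℂ] H => B x) hq

/-- Cantor-Schroeder-Bernstein step. -/
theorem aux_csb (R : VonNeumannAlgebra H) (T q : H →L[ℂ] H) (hT : T ∈ R) (hq : q ∈ R)
    (hTT : star T * T = 1) (hqT : q * T = T) (hqs : star q = q) (hqq : q * q = q) :
    ∃ t ∈ R, star t * t = 1 ∧ t * star t = q := by
  let K : Submodule ℂ H := ⨅ n : ℕ, ((1 - q) * star T ^ n : H →L[ℂ] H).ker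
  have hK : ∀ z, z ∈ K ↔ ∀ n : ℕ, ((1 - q) * star T ^ n : H →L[ℂ] H) z = 0 := by
    intro z
    simp only [K, Submodule.mem_iInf]
    rfl
  have hcl : IsClosed (K : Set H) := by
    simp only [K, Submodule.coe_iInf]
    exact isClosed_iInter fun a => ContinuousLinearMap.isClosed_ker _
  have : CompleteSpace K := hcl.completeSpace_coe
  have hP : K.starProjection ∈ R := by
    apply aux_proj
    intro y hy z hz
    rw [hK] at hz ⊢
    intro n
    have h := aux_comm (mul_mem (sub_mem (one_mem _) hq) (pow_mem (star_mem hT) n)) hy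
    have h' : y (((1 - q) * star T ^ n : H →L[ℂ] H) z) =
      ((1 - q) * star T ^ n : H →L[ℂ] H) (y z) := congrArg (fun T : H →L[ℂ] H => T z) h
    rw [← h', hz n, map_zero]
  have hmemK : ∀ z, K.starProjection z ∈ K := fun z => Submodule.starProjection_apply_mem _ _
  have hfix : ∀ z ∈ K, K.starProjection z = z :=
    fun z hz => Submodule.starProjection_eq_self_iff.2 hz
  have hPsp : IsStarProjection K.starProjection := isStarProjection_starProjection
  generalize K.starProjection = P at *
  have hPP : P * P = P := hPsp.isIdempotentElem
  have hPs : star P = P := hPsp.isSelfAdjoint.star_eq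
  have hTq : star T * q = star T := by
    have := congrArg star hqT
    rwa [star_mul, hqs] at this
  let Q : H →L[ℂ] H := q - T * star T + T * P * star T
  have hqQ : q * Q = Q := by
    simp only [Q, mul_add, mul_sub, ← mul_assoc, hqq, hqT]
  have hTQ : star T * Q = P * star T := by
    simp only [Q, mul_add, mul_sub, ← mul_assoc, hTq, hTT, one_mul, sub_self, zero_add]
  have hQs : star Q = Q := by
    simp only [Q, star_add, star_sub, star_mul, star_star, hqs, hPs, mul_assoc]
  have hQP : Q * P = P := by
    ext x
    have hx := hmemK x
    have h0 : q (P x) = P x := by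
      have := (hK _).1 hx 0
      rw [pow_zero, mul_one] at this
      change P x - q (P x) = 0 at this
      exact (sub_eq_zero.1 this).symm
    have h1 : P (star T (P x)) = star T (P x) := by
      apply hfix
      rw [hK]
      intro n
      have := (hK _).1 hx (n + 1)
      rw [pow_succ] at this
      exact this
    change q (P x) - T (star T (P x)) + T (P (star T (P x))) = P x
    rw [h0, h1]
    abel
  have hPQ : P * Q = Q := by
    ext x
    apply hfix
    rw [hK]
    intro n
    cases n with
    | zero =>
      have : (1 - q) * Q = 0 := by rw [sub_mul, one_mul, hqQ, sub_self]
      have h : (1 - q : H →L[ℂ] H) (Q x) = 0 := congrArg (fun B : H →L[ℂ] H => B x) this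
      simpa using h
    | succ n =>
      have h : star T (Q x) = P (star T x) := congrArg (fun B : H →L[ℂ] H => B x) hTQ
      have h2 := (hK _).1 (hmemK (star T x)) n
      rw [← h] at h2
      rw [pow_succ]
      exact h2
  have hPeq : P = Q := by
    have h := congrArg star hQP
    rw [star_mul, hQs, hPs, hPQ] at h
    exact h.symm
  have hTP : star T * P = P * star T := by
    conv_lhs => rw [hPeq]
    exact hTQ
  have hPT : P * T = T * P := by
    have h := congrArg star hTP
    simpa only [star_mul, star_star, hPs] using h
  have hst : star (T * (1 - P) + P) = (1 - P) * star T + P := by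
    simp [star_mul, hPs]
  refine ⟨T * (1 - P) + P, ?_, ?_, ?_⟩
  · exact add_mem (mul_mem hT (sub_mem (one_mem _) hP)) hP
  · rw [hst]
    have e1 : (1 - P) * star T * (T * (1 - P)) = 1 - P := by
      rw [mul_assoc, ← mul_assoc (star T), hTT, one_mul]
      simp [mul_sub, sub_mul, hPP]
    have e2 : (1 - P) * star T * P = 0 := by
      rw [mul_assoc, hTP, ← mul_assoc, sub_mul, one_mul, hPP, sub_self, zero_mul]
    have e3 : P * (T * (1 - P)) = 0 := by
      rw [← mul_assoc, hPT, mul_assoc, mul_sub, mul_one, hPP, sub_self, mul_zero]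
    rw [add_mul, mul_add, mul_add, e1, e2, e3, hPP]
    abel
  · rw [hst]
    have e1 : T * (1 - P) * ((1 - P) * star T) = T * star T - T * P * star T := by
      have : (1 - P) * (1 - P) = 1 - P := by simp [mul_sub, sub_mul, hPP]
      rw [mul_assoc, ← mul_assoc (1 - P), this]
      simp only [mul_sub, sub_mul, one_mul, mul_assoc]
    have e2 : T * (1 - P) * P = 0 := by
      rw [mul_assoc, sub_mul, one_mul, hPP, sub_self, mul_zero]
    have e3 : P * ((1 - P) * star T) = 0 := by
      rw [← mul_assoc, mul_sub, mul_one, hPP, sub_self, zero_mul]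
    rw [add_mul, mul_add, mul_add, e1, e2, e3, hPP]
    have : P = q - T * star T + T * P * star T := hPeq
    conv_lhs => rw [add_zero, zero_add]; arg 2; rw [this]
    abel

theorem aux_countable [TopologicalSpace.SeparableSpace H] (R : VonNeumannAlgebra H)
    (hR : IsFactor R) (f : H →L[ℂ] H) (hf : f ∈ R) (hf0 : f ≠ 0) :
    ∃ r : ℕ → (H →L[ℂ] H), (∀ n, r n ∈ R) ∧ ∀ x, (∀ n, f (r n x) = 0) → x = 0 := by
  have : SecondCountableTopology H := UniformSpace.secondCountable_of_separable H
  obtain ⟨S, hS, hU⟩ := TopologicalSpace.isOpen_iUnion_countable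
    (fun a : R => {x : H | f ((a : H →L[ℂ] H) x) ≠ 0})
    (fun a => isOpen_ne_fun (by fun_prop) continuous_const)
  have hS' : (insert (0 : R) S).Countable := hS.insert _
  obtain ⟨g, hg⟩ := hS'.exists_eq_range (Set.insert_nonempty _ _)
  refine ⟨fun n => (g n : H →L[ℂ] H), fun n => (g n).2, fun x hx => ?_⟩
  apply aux_factor R hR f hf hf0
  intro a ha
  by_contra hne
  have hxU : x ∈ ⋃ a : R, {x : H | f ((a : H →L[ℂ] H) x) ≠ 0} :=
    Set.mem_iUnion.2 ⟨⟨a, ha⟩, hne⟩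
  rw [← hU] at hxU
  simp only [Set.mem_iUnion] at hxU
  obtain ⟨b, hb, hbx⟩ := hxU
  have : b ∈ Set.range g := by rw [← hg]; exact Set.mem_insert_of_mem _ hb
  obtain ⟨n, rfl⟩ := this
  exact hbx (hx n)

/-- The nonzero projection `q` in `R` commuting with the infinite factor `M` is equivalent
to `1`. -/
theorem aux_equiv [TopologicalSpace.SeparableSpace H] (M R : VonNeumannAlgebra H)
    (hMR : ∀ x : H →L[ℂ] H, x ∈ M → x ∈ R)
    (hM : InfiniteFactor M) (hR : IsFactor R) (q : H →L[ℂ] H) (hq : q ∈ R)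
    (hqM : q ∈ M.commutant) (hqs : star q = q) (hqq : q * q = q) (hq0 : q ≠ 0) :
    ∃ t ∈ R, star t * t = 1 ∧ t * star t = q := by
  obtain ⟨hMf, p, hp, -, -, hp1, s, hs, hss, hsp⟩ := hM
  subst hsp
  obtain ⟨e, he⟩ : ∃ e, e = 1 - s * star s := ⟨_, rfl⟩
  have he0 : e ≠ 0 := by
    rw [he]
    intro h
    exact hp1 (sub_eq_zero.1 h).symm
  have heM : e ∈ M := he ▸ sub_mem (one_mem _) hp
  have hes : star e = e := by simp [he]
  have hes0 : e * s = 0 := by rw [he, sub_mul, one_mul, mul_assoc, hss, mul_one, sub_self]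
  have hse0 : star s * e = 0 := by
    rw [he, mul_sub, mul_one, ← mul_assoc, hss, one_mul, sub_self]
  have hee : e * e = e := by
    conv_lhs => rw [he, sub_mul, one_mul, ← he, mul_assoc, hse0, mul_zero, sub_zero]
  have hqe : q * e = e * q := aux_comm heM hqM
  have hqs' : q * s = s * q := aux_comm hs hqM
  have hf0 : e * q ≠ 0 := by
    intro h
    apply hq0
    ext x
    apply aux_factor M hMf e heM he0
    intro a ha
    have hqa : q * a = a * q := aux_comm ha hqM
    have : e * (a * q) = 0 := by rw [← hqa, ← mul_assoc, h, zero_mul]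
    exact congrArg (fun B : H →L[ℂ] H => B x) this
  obtain ⟨r, hr, hrx⟩ := aux_countable R hR (e * q) (mul_mem (hMR _ heM) hq) hf0
  -- the orthogonality relations
  have hpow : ∀ n : ℕ, star s ^ n * s ^ n = 1 := by
    intro n
    induction n with
    | zero => simp
    | succ n ih =>
      rw [pow_succ, pow_succ', mul_assoc, ← mul_assoc (star s) s, hss, one_mul, ih]
  have horth : ∀ n m : ℕ, n ≠ m → e * star s ^ n * (s ^ m * e) = 0 := by
    intro n m hnm
    rcases lt_or_gt_of_ne hnm with h | h
    · obtain ⟨k, rfl⟩ := Nat.exists_eq_add_of_lt h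
      have : e * star s ^ n * (s ^ (n + k + 1) * e) =
          e * (star s ^ n * s ^ n) * (s ^ (k + 1) * e) := by
        rw [add_assoc, pow_add]; simp only [mul_assoc]
      rw [this, hpow, mul_one, pow_succ', mul_assoc s, ← mul_assoc e s, hes0, zero_mul]
    · obtain ⟨k, rfl⟩ := Nat.exists_eq_add_of_lt h
      have : e * star s ^ (m + k + 1) * (s ^ m * e) =
          e * star s ^ (k + 1) * (star s ^ m * s ^ m) * e := by
        rw [show m + k + 1 = (k + 1) + m by ring, pow_add]; simp only [mul_assoc]
      rw [this, hpow, mul_one, pow_succ, mul_assoc, mul_assoc, hse0, mul_zero, mul_zero]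
  have hdiag : ∀ n : ℕ, e * star s ^ n * (s ^ n * e) = e := by
    intro n
    rw [mul_assoc, ← mul_assoc (star s ^ n), hpow, one_mul, hee]
  let g : ℕ → (H →L[ℂ] H) := fun n => s ^ n * e * (e * q * r n)
  let c : ℕ → ℝ := fun n => (1 / 2) ^ n * (‖g n‖ + 1)⁻¹
  have hc : ∀ n, c n ≠ 0 := fun n => by positivity
  have hsum : Summable fun n => ((c n : ℝ) : ℂ) • g n := by
    apply Summable.of_norm_bounded summable_geometric_two
    intro n
    rw [norm_smul, Complex.norm_real, Real.norm_of_nonneg (by positivity), mul_assoc]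
    apply mul_le_of_le_one_right (by positivity)
    rw [inv_mul_le_iff₀ (by positivity)]
    linarith
  obtain ⟨X, hX⟩ := hsum
  have hgR : ∀ n, g n ∈ R := fun n => mul_mem (mul_mem (pow_mem (hMR _ hs) n) (hMR _ heM))
    (mul_mem (mul_mem (hMR _ heM) hq) (hr n))
  have hXR : X ∈ R := by
    apply aux_mem
    intro y hy
    have h1 := hX.mul_left y
    have h2 := hX.mul_right y
    refine h1.unique ?_
    convert h2 using 2 with n
    rw [mul_smul_comm, smul_mul_assoc, aux_comm (hgR n) hy]
  have hqg : ∀ n, q * g n = g n := by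
    intro n
    have h1 : q * s ^ n = s ^ n * q := (Commute.pow_right (show Commute q s from hqs') n).eq
    calc q * g n = (q * s ^ n) * e * (e * q * r n) := by simp only [g, mul_assoc]
      _ = s ^ n * (q * e) * (e * q * r n) := by rw [h1]; simp only [mul_assoc]
      _ = s ^ n * e * ((q * e) * q * r n) := by
          conv_lhs => rw [hqe]
          simp only [mul_assoc]
      _ = s ^ n * e * (e * (q * q) * r n) := by rw [hqe, mul_assoc e q q]
      _ = g n := by rw [hqq]
  have hqX : q * X = X := by
    have h1 := hX.mul_left q
    refine h1.unique ?_
    have h2 : (fun n => q * (((c n : ℝ) : ℂ) • g n)) = fun n => ((c n : ℝ) : ℂ) • g n := by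
      funext n
      rw [mul_smul_comm, hqg]
    rw [h2]
    exact hX
  have hinj : ∀ x, X x = 0 → x = 0 := by
    intro x hx
    apply hrx
    intro m
    have h1 := hX.mul_left (e * star s ^ m)
    have h2 : HasSum (fun n => e * star s ^ m * (((c n : ℝ) : ℂ) • g n))
        (((c m : ℝ) : ℂ) • (e * q * r m)) := by
      have h3 : ((c m : ℝ) : ℂ) • (e * q * r m) =
          (fun n => e * star s ^ m * (((c n : ℝ) : ℂ) • g n)) m := by
        simp only [g]
        rw [mul_smul_comm, ← mul_assoc, hdiag, ← mul_assoc, ← mul_assoc, hee]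
      rw [h3]
      apply hasSum_single
      intro n hn
      simp only [g]
      rw [mul_smul_comm, ← mul_assoc, horth m n hn.symm, zero_mul, smul_zero]
    have h4 := h1.unique h2
    have h5 : (e * star s ^ m) (X x) = ((c m : ℝ) : ℂ) • (e * q) (r m x) :=
      congrArg (fun B : H →L[ℂ] H => B x) h4
    rw [hx, map_zero] at h5
    rcases smul_eq_zero.1 h5.symm with h | h
    · exact absurd (Complex.ofReal_eq_zero.1 h) (hc m)
    · exact h
  obtain ⟨T, hT, hTT, hqT⟩ := aux_polar R X hXR hinj q hqX
  exact aux_csb R T q hT hq hTT hqT hqs hqq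

theorem stmt12 [TopologicalSpace.SeparableSpace H]
    (N M R : VonNeumannAlgebra H)
    (hNR : ∀ x : H →L[ℂ] H, x ∈ N → x ∈ R) (hMR : ∀ x : H →L[ℂ] H, x ∈ M → x ∈ R)
    (hNM : ∀ x : H →L[ℂ] H, x ∈ N → x ∈ M.commutant)
    (hM : InfiniteFactor M) (hR : IsFactor R)
    (w : H →L[ℂ] H) (hw₁ : star w * w = 1) (hw₂ : w * star w = 1)
    (u : H →L[ℂ] H) (huN : u ∈ N) (hiso : star u * u = 1)
    (hmem : star w * (u * star u) * w ∈ N) :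
    ∃ W : H →L[ℂ] H, star W * W = 1 ∧ W * star W = 1 ∧
      ∀ x : H →L[ℂ] H, x ∈ R.commutant →
        (W * star u) * x * star (W * star u) = (star u * w) * x * star (star u * w) := by

  have huu : star u * (u * star u) * u = 1 := by
    rw [← mul_assoc, hiso, one_mul, hiso]
  have hv : star u * w * star (star u * w) = 1 := by
    rw [star_mul, star_star, mul_assoc, ← mul_assoc w, hw₂, one_mul, hiso]
  have hvv : star (star u * w) * (star u * w) = star w * (u * star u) * w := by
    rw [star_mul, star_star]; simp only [mul_assoc]
  obtain ⟨v, hvdef⟩ : ∃ v, v = star u * w := ⟨_, rfl⟩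
  obtain ⟨q, hqdef⟩ : ∃ q, q = star w * (u * star u) * w := ⟨_, rfl⟩
  rw [← hqdef] at hmem hvv
  rw [← hvdef] at hv hvv ⊢
  have hqs : star q = q := by rw [← hvv, star_mul, star_star]
  have hqq : q * q = q := by
    rw [← hvv, mul_assoc, ← mul_assoc v, hv, one_mul]
  have hne : (1 : H →L[ℂ] H) ≠ 0 := by
    intro h
    obtain ⟨-, p, -, -, -, hp1, -⟩ := hM
    apply hp1
    rw [← mul_one p, h, mul_zero]
  have hq0 : q ≠ 0 := by
    intro h
    apply hne
    calc (1 : H →L[ℂ] H) = (v * star v) * (v * star v) := by rw [hv, one_mul]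
      _ = v * (star v * v) * star v := by simp only [mul_assoc]
      _ = 0 := by rw [hvv, h, mul_zero, zero_mul]
  obtain ⟨t, ht, htt, htq⟩ := aux_equiv M R hMR hM hR q (hNR _ hmem) (hNM _ hmem) hqs hqq hq0
  have hvq : v * q * star v = 1 := by
    rw [← hvv, ← mul_assoc, hv, one_mul, hv]
  refine ⟨v * t, ?_, ?_, ?_⟩
  · rw [star_mul, mul_assoc, ← mul_assoc (star v), hvv, ← htq, mul_assoc t, htt, mul_one, htt]
  · rw [star_mul, mul_assoc, ← mul_assoc t, htq, ← mul_assoc, hvq]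
  · intro x hx
    have h1 : x * u = u * x := aux_comm (hNR _ huN) hx
    have h2 : x * star t = star t * x := aux_comm (star_mem ht) hx
    have h3 : q * star v = star v := by rw [← hvv, mul_assoc, hv, mul_one]
    have h5 : x * q = q * x := aux_comm (hNR _ hmem) hx
    calc v * t * star u * x * star (v * t * star u)
        = v * t * star u * (x * u) * star t * star v := by
          simp only [star_mul, star_star, mul_assoc]
      _ = v * t * (star u * u) * (x * star t) * star v := by rw [h1]; simp only [mul_assoc]
      _ = v * (t * star t) * x * star v := by rw [hiso, h2, mul_one]; simp only [mul_assoc]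
      _ = v * x * (q * star v) := by rw [htq, mul_assoc v, ← h5]; simp only [mul_assoc]
      _ = v * x * star v := by rw [h3]
end

section
/- Let H be a complex Hilbert space, let x, y be bounded operators on H, and let U, Ũ be unitary operators on H. Assume that U*·x·U commutes with y and that Ũ commutes with y. Then ‖x·y − y·x‖ ≤ 4·‖U − Ũ‖·‖x‖·‖y‖. -/
theorem stmt16 {H : Type*} [NormedAddCommGroup H] [InnerProductSpace ℂ H] [CompleteSpace H]
    (x y U V : H →L[ℂ] H)
    (hU₁ : star U * U = 1) (hU₂ : U * star U = 1)
    (hV₁ : star V * V = 1) (hV₂ : V * star V = 1)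
    (hcomm : (star U * x * U) * y = y * (star U * x * U))
    (hVy : V * y = y * V) :
    ‖x * y - y * x‖ ≤ 4 * ‖U - V‖ * ‖x‖ * ‖y‖ := by
  have hU : U ∈ unitary (H →L[ℂ] H) := Unitary.mem_iff.2 ⟨hU₁, hU₂⟩
  have hV : V ∈ unitary (H →L[ℂ] H) := Unitary.mem_iff.2 ⟨hV₁, hV₂⟩
  have hUs := Unitary.star_mem hU
  have hVsy : star V * y = y * star V := by
    calc star V * y = star V * (y * V) * star V := by
          rw [mul_assoc, mul_assoc, hV₂, mul_one]
      _ = (star V * V) * y * star V := by rw [← hVy]; simp only [mul_assoc]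
      _ = y * star V := by rw [hV₁, one_mul]
  have hz : ‖star U * x * U‖ = ‖x‖ := by
    rw [CStarRing.norm_mul_mem_unitary _ hU, CStarRing.norm_mem_unitary_mul _ hUs]
  have hx : x = U * (star U * x * U) * star U := by
    calc x = (U * star U) * x * (U * star U) := by rw [hU₂, one_mul, mul_one]
      _ = _ := by simp only [mul_assoc]
  generalize star U * x * U = z at *
  have hc : (V * z * star V) * y = y * (V * z * star V) := by
    calc (V * z * star V) * y = V * z * (star V * y) := by simp only [mul_assoc]
      _ = V * (z * y) * star V := by rw [hVsy]; simp only [mul_assoc]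
      _ = (V * y) * z * star V := by rw [hcomm]; simp only [mul_assoc]
      _ = _ := by rw [hVy]; simp only [mul_assoc]
  have hd : x - V * z * star V = (U - V) * z * star U + V * (z * star (U - V)) := by
    conv_lhs => rw [hx]
    rw [star_sub]
    noncomm_ring
  have hn : ‖x - V * z * star V‖ ≤ 2 * ‖U - V‖ * ‖x‖ := by
    rw [hd]
    refine (norm_add_le _ _).trans ?_
    rw [CStarRing.norm_mul_mem_unitary _ hUs, CStarRing.norm_mem_unitary_mul _ hV]
    have h1 := norm_mul_le (U - V) z
    have h2 := norm_mul_le z (star (U - V))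
    rw [norm_star] at h2
    rw [hz] at h1 h2
    linarith
  have he : x * y - y * x = (x - V * z * star V) * y - y * (x - V * z * star V) := by
    rw [sub_mul, mul_sub, hc]; abel
  rw [he]
  have h1 := norm_mul_le (x - V * z * star V) y
  have h2 := norm_mul_le y (x - V * z * star V)
  have h3 := norm_sub_le ((x - V * z * star V) * y) (y * (x - V * z * star V))
  have h4 := mul_le_mul_of_nonneg_right hn (norm_nonneg y)
  linarith
end

section
/- Let B be a C*-algebra and T : B → B a *-homomorphism. Let U ∈ B be unitary and let x ∈ B satisfy T(U*·x·U) = U*·x·U. Then ‖T(x) − x‖ ≤ 2·‖T(U) − U‖·‖x‖. -/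
theorem stmt17 {B : Type*} [NormedRing B] [StarRing B] [CStarRing B]
    [NormedAlgebra ℂ B] [StarModule ℂ B] [CompleteSpace B]
    (T : B →⋆ₐ[ℂ] B) (U x : B)
    (hU : U ∈ unitary B)
    (h : T (star U * x * U) = star U * x * U) :
    ‖T x - x‖ ≤ 2 * ‖T U - U‖ * ‖x‖ := by
  have hUs : star U ∈ unitary B := Unitary.star_mem hU
  have h2 : U * star U = 1 := (Unitary.mem_iff.mp hU).2
  have hV : T U ∈ unitary B := Unitary.map_mem T hU
  have hVs : star (T U) ∈ unitary B := Unitary.star_mem hV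
  have hx : U * (star U * x * U) * star U = x := by
    calc U * (star U * x * U) * star U = (U * star U) * x * (U * star U) := by
          simp only [mul_assoc]
      _ = x := by rw [h2, one_mul, mul_one]
  have hy : ‖star U * x * U‖ = ‖x‖ := by
    rw [CStarRing.norm_mul_mem_unitary _ hU, CStarRing.norm_mem_unitary_mul _ hUs]
  generalize star U * x * U = y at h hx hy
  have hT : T x = T U * y * star (T U) := by
    rw [← hx, map_mul, map_mul, map_star, h]
  have key : T x - x = (T U - U) * y * star (T U) + U * (y * star (T U - U)) := by
    rw [hT]
    conv_lhs => rw [← hx]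
    rw [star_sub]
    noncomm_ring
  have e1 : ‖(T U - U) * y * star (T U)‖ ≤ ‖T U - U‖ * ‖x‖ := by
    rw [CStarRing.norm_mul_mem_unitary _ hVs, ← hy]
    exact norm_mul_le _ _
  have e2 : ‖U * (y * star (T U - U))‖ ≤ ‖x‖ * ‖T U - U‖ := by
    rw [CStarRing.norm_mem_unitary_mul _ hU, ← hy, ← norm_star (T U - U)]
    exact norm_mul_le _ _
  rw [key]
  refine (norm_add_le _ _).trans ?_
  linarith
end
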